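/- arXiv:cs/0607028 — 2 statements merged into one kernel-verified Lean document; each statement's English description precedes it below -/
import Mathlib

section
/- The series ∑_{m=1}^{∞} m!/(m^{m+2}·ln 2) converges, and its sum S satisfies 1.6702 ≤ S ≤ 1.6703. -/
/-!
The coefficients `c m = m! / m ^ (m + 2)` satisfy `c (m + 1) = (m / (m + 1)) ^ (m + 2) * c m`, and
Bernoulli's inequality `(1 + 1 / m) ^ (m + 2) ≥ 2` makes the ratio at most `1 / 2`. Hence the tail
from index `N` on is at most `2 * c N`, and a rational partial sum, divided by `log 2`, encloses the
constant. Its value is `1.67020047…`: the lower bound `1.6702` leaves a slack below `10⁻⁶`, which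
takes all terms up to `m = 12`, whereas `N = 8` suffices for the upper bound.
-/

theorem two_mul_pow_le_add_one_pow {R : Type*} [Semiring R] [LinearOrder R] [IsOrderedRing R]
    [ExistsAddOfLE R] {a : R} {n : ℕ} (ha : 0 ≤ a) (han : a ≤ n) (hn : n ≠ 0) :
    2 * a ^ n ≤ (a + 1) ^ n := by
  have bernoulli : a ^ n + n * a ^ (n - 1) * 1 ≤ (a + 1) ^ n :=
    (Commute.one_right a).pow_add_mul_le_add_pow ha
      (add_nonneg (mul_nonneg zero_le_two ha) zero_le_one) n
  calc 2 * a ^ n = a ^ n + a * a ^ (n - 1) := by rw [two_mul, mul_pow_sub_one hn]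
    _ ≤ a ^ n + n * a ^ (n - 1) * 1 := by rw [mul_one]; gcongr
    _ ≤ (a + 1) ^ n := bernoulli

theorem tsum_le_div_one_sub_of_ratio_le {f : ℕ → ℝ} {r : ℝ} (hf : Summable f) (hr₀ : 0 ≤ r)
    (hr₁ : r < 1) (hratio : ∀ n, f (n + 1) ≤ r * f n) : ∑' n, f n ≤ f 0 / (1 - r) := by
  have hgeom : HasSum (fun n ↦ r ^ n * f 0) ((1 - r)⁻¹ * f 0) :=
    (hasSum_geometric_of_lt_one hr₀ hr₁).mul_right (f 0)
  rw [div_eq_inv_mul]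
  exact hasSum_le (fun n ↦ le_geom hr₀ n fun k _ ↦ hratio k) hf.hasSum hgeom

/-- The main Mellin term `m! / (m ^ (m + 2) * log 2)` of index `m` without its constant factor
`1 / log 2`. The index `0`, absent from the series over `m ≥ 1`, contributes `1 / 0 = 0`. -/
noncomputable def mellinMainCoeff (m : ℕ) : ℝ :=
  (Nat.factorial m : ℝ) / (m : ℝ) ^ (m + 2)

theorem mellinMainCoeff_nonneg (m : ℕ) : 0 ≤ mellinMainCoeff m := by
  unfold mellinMainCoeff
  positivity

theorem mellinMainCoeff_succ {m : ℕ} (hm : m ≠ 0) :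
    mellinMainCoeff (m + 1) = ((m : ℝ) / (m + 1)) ^ (m + 2) * mellinMainCoeff m := by
  unfold mellinMainCoeff
  rw [Nat.factorial_succ, Nat.cast_mul, Nat.cast_succ, div_pow]
  field_simp
  ring

theorem mellinMainCoeff_succ_le {m : ℕ} (hm : m ≠ 0) :
    mellinMainCoeff (m + 1) ≤ 1 / 2 * mellinMainCoeff m := by
  have hpow : 2 * (m : ℝ) ^ (m + 2) ≤ ((m : ℝ) + 1) ^ (m + 2) :=
    two_mul_pow_le_add_one_pow m.cast_nonneg (by gcongr; omega) (by omega)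
  have hratio : ((m : ℝ) / (m + 1)) ^ (m + 2) ≤ 1 / 2 := by
    rw [div_pow, div_le_div_iff₀ (by positivity) two_pos]
    linarith
  rw [mellinMainCoeff_succ hm]
  exact mul_le_mul_of_nonneg_right hratio (mellinMainCoeff_nonneg m)

theorem summable_mellinMainCoeff : Summable mellinMainCoeff := by
  refine summable_of_ratio_norm_eventually_le one_half_lt_one ?_
  filter_upwards [Filter.eventually_ne_atTop 0] with m hm
  simpa only [Real.norm_of_nonneg (mellinMainCoeff_nonneg _)] using mellinMainCoeff_succ_le hm

theorem tsum_mellinMainCoeff_nat_add_le {N : ℕ} (hN : N ≠ 0) :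
    ∑' n, mellinMainCoeff (n + N) ≤ 2 * mellinMainCoeff N := by
  have hratio (n : ℕ) : mellinMainCoeff (n + 1 + N) ≤ 1 / 2 * mellinMainCoeff (n + N) := by
    simpa only [add_right_comm] using mellinMainCoeff_succ_le (m := n + N) (by omega)
  calc ∑' n, mellinMainCoeff (n + N) ≤ mellinMainCoeff (0 + N) / (1 - 1 / 2) :=
        tsum_le_div_one_sub_of_ratio_le ((summable_nat_add_iff N).2 summable_mellinMainCoeff)
          one_half_pos.le one_half_lt_one hratio
    _ = 2 * mellinMainCoeff N := by rw [zero_add]; ring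

theorem tsum_mellinMainCoeff_le_sum_range_add {N : ℕ} (hN : N ≠ 0) :
    ∑' m, mellinMainCoeff m ≤
      ∑ m ∈ Finset.range N, mellinMainCoeff m + 2 * mellinMainCoeff N := by
  rw [← summable_mellinMainCoeff.sum_add_tsum_nat_add N]
  gcongr
  exact tsum_mellinMainCoeff_nat_add_le hN

theorem le_tsum_mellinMainCoeff : 1.1576945 ≤ ∑' m, mellinMainCoeff m :=
  calc (1.1576945 : ℝ) ≤ ∑ m ∈ Finset.range 13, mellinMainCoeff m := by
        norm_num [Finset.sum_range_succ, mellinMainCoeff, Nat.factorial]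
    _ ≤ ∑' m, mellinMainCoeff m :=
        summable_mellinMainCoeff.sum_le_tsum _ fun m _ ↦ mellinMainCoeff_nonneg m

theorem tsum_mellinMainCoeff_le : ∑' m, mellinMainCoeff m ≤ 1.15772 :=
  calc ∑' m, mellinMainCoeff m
      ≤ ∑ m ∈ Finset.range 8, mellinMainCoeff m + 2 * mellinMainCoeff 8 :=
        tsum_mellinMainCoeff_le_sum_range_add (by decide)
    _ ≤ 1.15772 := by norm_num [Finset.sum_range_succ, mellinMainCoeff, Nat.factorial]

theorem stmt17 :
    Summable (fun m : ℕ => (Nat.factorial m : ℝ) / ((m : ℝ) ^ (m + 2) * Real.log 2)) ∧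
    (1.6702 : ℝ) ≤ ∑' m : ℕ, (Nat.factorial m : ℝ) / ((m : ℝ) ^ (m + 2) * Real.log 2) ∧
    ∑' m : ℕ, (Nat.factorial m : ℝ) / ((m : ℝ) ^ (m + 2) * Real.log 2) ≤ 1.6703 := by
  have hterm (m : ℕ) : (Nat.factorial m : ℝ) / ((m : ℝ) ^ (m + 2) * Real.log 2) =
      mellinMainCoeff m / Real.log 2 := (div_div _ _ _).symm
  have hlog : 0 < Real.log 2 := Real.log_pos one_lt_two
  simp only [hterm, tsum_div_const]
  refine ⟨summable_mellinMainCoeff.div_const _, ?_, ?_⟩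
  · rw [le_div_iff₀ hlog]
    linarith [le_tsum_mellinMainCoeff, Real.log_two_lt_d9]
  · rw [div_le_iff₀ hlog]
    linarith [tsum_mellinMainCoeff_le, Real.log_two_gt_d9]
end

section
/- For all integers n ≥ 2 and i ≥ 1, (1/2)·C(n,2)·4^{−i}·(1 − 1/2^i)^{n−2} ≤ (n²/4^i)·exp(−n/2^i), where C(n,2) = n(n−1)/2. Moreover, for all integers n ≥ 2, C(n,2) ≥ (n²/2)·exp(−1/√n). -/
/-!
Put `p = 1 / 2 ^ i`. The tangent to `exp` at `0` gives `1 - p ≤ exp (-p)`, and applied at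
`2 - 3 * p` it gives `3 * (1 - p) ≤ exp (2 - 3 * p)`. For `n ≥ 3`, the second bound for one factor
of `(1 - p) ^ (n - 2)` and the first for the others give `3 * (1 - p) ^ (n - 2) ≤ exp (2 - n * p)`;
for `n = 2` the factor `3` is lost, but then `n.choose 2` is only `n ^ 2 / 4`. In both cases the
upper bound follows from `exp 2 ≤ 8`.

For the lower bound, `x ↦ exp (-x) + x ^ 2` is convex and equals `1` at `0`, so it is at most `1` on
`[0, b]` as soon as it is at most `1` at `b`. At `b = √(1 / 2)` this amounts to `log 2 ≤ √(1 / 2)`;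
then take `x = 1 / √n`.
-/

open Real

theorem exp_two_le_eight : exp 2 ≤ 8 := by
  calc exp 2 = exp 1 ^ 2 := by rw [← exp_nat_mul]; norm_num
    _ ≤ 2.7182818286 ^ 2 := by gcongr; exact exp_one_lt_d9.le
    _ ≤ 8 := by norm_num

theorem three_mul_one_sub_pow_succ_le_exp {p : ℝ} (hp : p ≤ 1) (k : ℕ) :
    3 * (1 - p) ^ (k + 1) ≤ exp (2 - (k + 3) * p) := by
  have : 0 ≤ 1 - p := sub_nonneg.mpr hp
  calc 3 * (1 - p) ^ (k + 1) = (1 - p) ^ k * (2 - 3 * p + 1) := by ring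
    _ ≤ exp (-p) ^ k * exp (2 - 3 * p) := by
      gcongr
      · linarith
      · exact one_sub_le_exp_neg p
      · exact add_one_le_exp _
    _ = exp (2 - (k + 3) * p) := by
      rw [← exp_nat_mul, ← exp_add]
      ring_nf

theorem choose_two_mul_one_sub_pow_le {p : ℝ} (hp : p ≤ 1) (n : ℕ) :
    (n.choose 2 : ℝ) * (1 - p) ^ (n - 2) ≤ (n : ℝ) ^ 2 / 4 * exp (2 - n * p) := by
  match n with
  | 0 => simp
  | 1 =>
    rw [Nat.choose_eq_zero_of_lt one_lt_two, Nat.cast_zero, zero_mul]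
    positivity
  | 2 =>
    have h : 1 ≤ exp (2 - 2 * p) := one_le_exp (by linarith)
    norm_num [h]
  | k + 3 =>
    have hpow := three_mul_one_sub_pow_succ_le_exp hp k
    have hchoose : ((k + 3).choose 2 : ℝ) ≤ 3 * ((k + 3 : ℝ) ^ 2 / 4) := by
      have h := Nat.choose_le_pow_div (α := ℝ) 2 (k + 3)
      push_cast [Nat.factorial_two] at h
      linarith [sq_nonneg (k + 3 : ℝ)]
    have : 0 ≤ 1 - p := sub_nonneg.mpr hp
    calc ((k + 3).choose 2 : ℝ) * (1 - p) ^ (k + 1)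
        ≤ 3 * ((k + 3 : ℝ) ^ 2 / 4) * (1 - p) ^ (k + 1) := by gcongr
      _ = (k + 3 : ℝ) ^ 2 / 4 * (3 * (1 - p) ^ (k + 1)) := by ring
      _ ≤ (k + 3 : ℝ) ^ 2 / 4 * exp (2 - (k + 3) * p) := by gcongr
      _ = ((k + 3 : ℕ) : ℝ) ^ 2 / 4 * exp (2 - (k + 3 : ℕ) * p) := by push_cast; rfl

theorem convexOn_exp_neg_add_sq : ConvexOn ℝ Set.univ fun x : ℝ ↦ exp (-x) + x ^ 2 := by
  have h : ConvexOn ℝ Set.univ fun x : ℝ ↦ exp (-x) :=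
    convexOn_exp.comp_linearMap (-LinearMap.id)
  exact h.add even_two.convexOn_pow

theorem exp_neg_le_one_sub_sq_of_le {x b : ℝ} (hx : 0 ≤ x) (hxb : x ≤ b)
    (hb : exp (-b) ≤ 1 - b ^ 2) : exp (-x) ≤ 1 - x ^ 2 := by
  have hmax : exp (-x) + x ^ 2 ≤ max (exp (-0) + 0 ^ 2) (exp (-b) + b ^ 2) :=
    convexOn_exp_neg_add_sq.le_max_of_mem_Icc (Set.mem_univ 0) (Set.mem_univ b) ⟨hx, hxb⟩
  have hends : max (exp (-0) + 0 ^ 2) (exp (-b) + b ^ 2) ≤ 1 :=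
    max_le (by simp) (by linarith)
  linarith

theorem log_two_le_sqrt_half : log 2 ≤ √(1 / 2) := by
  refine le_sqrt_of_sq_le ?_
  calc log 2 ^ 2 ≤ 0.6931471808 ^ 2 := by gcongr; exact log_two_lt_d9.le
    _ ≤ 1 / 2 := by norm_num

theorem exp_neg_le_one_sub_sq {x : ℝ} (hx : 0 ≤ x) (hx' : x ≤ √(1 / 2)) :
    exp (-x) ≤ 1 - x ^ 2 := by
  refine exp_neg_le_one_sub_sq_of_le hx hx' ?_
  calc exp (-√(1 / 2)) ≤ exp (-log 2) := exp_le_exp.mpr (neg_le_neg log_two_le_sqrt_half)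
    _ = 1 - √(1 / 2) ^ 2 := by
      rw [exp_neg, exp_log two_pos, sq_sqrt (by norm_num)]
      norm_num

theorem exp_neg_one_div_sqrt_le {t : ℝ} (ht : 2 ≤ t) : exp (-1 / √t) ≤ 1 - 1 / t := by
  have hle : 1 / √t ≤ √(1 / 2) := by
    rw [one_div, ← sqrt_inv, ← one_div]
    gcongr
  calc exp (-1 / √t) = exp (-(1 / √t)) := by rw [neg_div]
    _ ≤ 1 - (1 / √t) ^ 2 := exp_neg_le_one_sub_sq (by positivity) hle
    _ = 1 - 1 / t := by rw [div_pow, one_pow, sq_sqrt (by linarith)]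

theorem stmt19_general :
    (∀ (n : ℕ) (p : ℝ), p ≤ 1 →
      (1 / 2 : ℝ) * (n.choose 2 : ℝ) * p ^ 2 * (1 - p) ^ (n - 2)
        ≤ (n : ℝ) ^ 2 * p ^ 2 * exp (-(n : ℝ) * p)) ∧
    (∀ t : ℝ, 2 ≤ t → t ^ 2 / 2 * exp (-1 / √t) ≤ t * (t - 1) / 2) := by
  refine ⟨fun n p hp ↦ ?_, fun t ht ↦ ?_⟩
  · calc (1 / 2 : ℝ) * n.choose 2 * p ^ 2 * (1 - p) ^ (n - 2)
        = 1 / 2 * p ^ 2 * (n.choose 2 * (1 - p) ^ (n - 2)) := by ring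
      _ ≤ 1 / 2 * p ^ 2 * ((n : ℝ) ^ 2 / 4 * exp (2 - n * p)) :=
        mul_le_mul_of_nonneg_left (choose_two_mul_one_sub_pow_le hp n) (by positivity)
      _ = (n : ℝ) ^ 2 * p ^ 2 * exp (-(n : ℝ) * p) * (exp 2 / 8) := by
        rw [sub_eq_add_neg, exp_add, ← neg_mul]
        ring
      _ ≤ (n : ℝ) ^ 2 * p ^ 2 * exp (-(n : ℝ) * p) :=
        mul_le_of_le_one_right (by positivity) (by linarith [exp_two_le_eight])
  · calc t ^ 2 / 2 * exp (-1 / √t) ≤ t ^ 2 / 2 * (1 - 1 / t) := by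
          gcongr
          exact exp_neg_one_div_sqrt_le ht
      _ = t * (t - 1) / 2 := by field_simp

theorem stmt19 :
    (∀ n i : ℕ, 2 ≤ n → 1 ≤ i →
      (1 / 2 : ℝ) * (n.choose 2 : ℝ) * (1 / 4 ^ i) * (1 - 1 / 2 ^ i) ^ (n - 2)
        ≤ ((n : ℝ) ^ 2 / 4 ^ i) * Real.exp (-(n : ℝ) / 2 ^ i)) ∧
    (∀ n : ℕ, 2 ≤ n →
      ((n : ℝ) ^ 2 / 2) * Real.exp (-1 / Real.sqrt n) ≤ (n.choose 2 : ℝ)) := by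
  refine ⟨fun n i _ _ ↦ ?_, fun n hn ↦ ?_⟩
  · have hp : (1 / 2 ^ i : ℝ) ≤ 1 := div_le_one_of_le₀ (one_le_pow₀ one_le_two) (by positivity)
    have hp_sq : (1 / 2 ^ i : ℝ) ^ 2 = 1 / 4 ^ i := by
      rw [div_pow, one_pow, pow_right_comm]
      norm_num
    simpa only [hp_sq, mul_one_div] using stmt19_general.1 n (1 / 2 ^ i) hp
  · simpa only [Nat.cast_choose_two] using stmt19_general.2 n (by exact_mod_cast hn)
end
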